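/- Let t ≥ 5, let A = F_2[w_2,w_3]/I_{2^t,3} and B = F_2[w_2,w_3,w_4]/I_{2^t-2,4}, and let ψ: A → B be the F_2-algebra homomorphism induced by the inclusion F_2[w_2,w_3] ⊆ F_2[w_2,w_3,w_4] (well defined since I_{2^t,3} ⊆ I_{2^t-2,4}). If z is a nonzero element of the tensor product A ⊗_{F_2} A, then (ψ⊗ψ)(z) · Σ_{d=2}^{2^{t-2}-3} (w_4^d ⊗ w_4^{2^{t-2}-1-d}) ≠ 0 in B ⊗_{F_2} B (here w_4^e denotes the image of w_4^e in B). -/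

import Mathlib

open MvPolynomial

/-- The polynomials `g_r = g_r^{(4)}` in `F_2[w_2,w_3,w_4]` (variables `X 0 = w_2`,
`X 1 = w_3`, `X 2 = w_4`): `g_0 = 1`, `g_r = 0` for `r < 0`, and
`g_r = w_2·g_{r-2} + w_3·g_{r-3} + w_4·g_{r-4}` for `r ≥ 1`. -/
noncomputable def g4 : ℤ → MvPolynomial (Fin 3) (ZMod 2)
  | r =>
    if r ≤ 0 then (if r = 0 then 1 else 0)
    else X 0 * g4 (r - 2) + X 1 * g4 (r - 3) + X 2 * g4 (r - 4)
  termination_by r => r.toNat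
  decreasing_by all_goals omega

/-- The ideal `I_{n,4} = (g_{n-3}, g_{n-2}, g_{n-1}, g_n)` of `F_2[w_2,w_3,w_4]`. -/
noncomputable def I4 (n : ℤ) : Ideal (MvPolynomial (Fin 3) (ZMod 2)) :=
  Ideal.span {g4 (n - 3), g4 (n - 2), g4 (n - 1), g4 n}

/-- The polynomials `g_r^{(3)}` in `F_2[w_2,w_3]` (variables `X 0 = w_2`, `X 1 = w_3`):
`g^{(3)}_0 = 1`, `g^{(3)}_r = 0` for `r < 0`, and
`g^{(3)}_r = w_2·g^{(3)}_{r-2} + w_3·g^{(3)}_{r-3}` for `r ≥ 1`. -/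
noncomputable def g3 : ℤ → MvPolynomial (Fin 2) (ZMod 2)
  | r =>
    if r ≤ 0 then (if r = 0 then 1 else 0)
    else X 0 * g3 (r - 2) + X 1 * g3 (r - 3)
  termination_by r => r.toNat
  decreasing_by all_goals omega

/-- The ideal `I_{n,3} = (g^{(3)}_{n-2}, g^{(3)}_{n-1}, g^{(3)}_n)` of `F_2[w_2,w_3]`. -/
noncomputable def I3 (n : ℤ) : Ideal (MvPolynomial (Fin 2) (ZMod 2)) :=
  Ideal.span {g3 (n - 2), g3 (n - 1), g3 n}

/-- The natural inclusion `F_2[w_2,w_3] ⊆ F_2[w_2,w_3,w_4]`. -/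
noncomputable def incl : MvPolynomial (Fin 2) (ZMod 2) →+* MvPolynomial (Fin 3) (ZMod 2) :=
  (rename (Fin.castSucc : Fin 2 → Fin 3)).toRingHom

lemma g4_nonpos {r : ℤ} (h : r < 0) : g4 r = 0 := by
  rw [g4, if_pos h.le, if_neg h.ne]
lemma g4_zero : g4 0 = 1 := by
  rw [g4]; simp
lemma g4_pos {r : ℤ} (h : 0 < r) :
    g4 r = X 0 * g4 (r - 2) + X 1 * g4 (r - 3) + X 2 * g4 (r - 4) := by
  rw [g4, if_neg (by omega)]
lemma g3_nonpos {r : ℤ} (h : r < 0) : g3 r = 0 := by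
  rw [g3, if_pos h.le, if_neg h.ne]
lemma g3_zero : g3 0 = 1 := by
  rw [g3]; simp
lemma g3_pos {r : ℤ} (h : 0 < r) :
    g3 r = X 0 * g3 (r - 2) + X 1 * g3 (r - 3) := by
  rw [g3, if_neg (by omega)]

lemma g4_double (k : ℕ) : ∀ m : ℤ, m < k →
    g4 (2 * m) = g4 m ^ 2 + X 0 * g4 (m - 1) ^ 2 + X 2 * g4 (m - 2) ^ 2 ∧
    g4 (2 * m + 1) = X 1 * g4 (m - 1) ^ 2 := by
  induction k with
  | zero =>
    intro m hm
    have hm : m < 0 := by simpa using hm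
    rw [g4_nonpos (r := 2 * m) (by omega), g4_nonpos (r := 2 * m + 1) (by omega),
      g4_nonpos (r := m) (by omega), g4_nonpos (r := m - 1) (by omega),
      g4_nonpos (r := m - 2) (by omega)]
    simp
  | succ k ih =>
    intro m hm
    push_cast at hm
    rcases lt_or_ge m k with h | h
    · exact ih m h
    have hmk : m = k := by omega
    have e1 := ih (m - 1) (by omega)
    have e2 := ih (m - 2) (by omega)
    rw [show m - 1 - 1 = m - 2 by ring, show m - 1 - 2 = m - 3 by ring,
      show 2 * (m - 1) = 2 * m - 2 by ring, show 2 * m - 2 + 1 = 2 * m - 1 by ring] at e1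
    rw [show m - 2 - 1 = m - 3 by ring, show m - 2 - 2 = m - 4 by ring,
      show 2 * (m - 2) = 2 * m - 4 by ring, show 2 * m - 4 + 1 = 2 * m - 3 by ring] at e2
    have h2 : (2 : MvPolynomial (Fin 3) (ZMod 2)) = 0 := CharTwo.two_eq_zero
    constructor
    · rcases Nat.eq_zero_or_pos k with h0 | h0
      · subst h0
        have : m = 0 := by simpa using hmk
        subst this
        rw [g4_nonpos (r := 0 - 1) (by omega), g4_nonpos (r := 0 - 2) (by omega)]
        simp [g4_zero]
      · rw [g4_pos (r := 2 * m) (by omega), g4_pos (r := m) (by omega), e1.1, e2.1, e2.2]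
        linear_combination (X 0 * X 2 * g4 (m - 3) ^ 2 - X 0 * X 1 * g4 (m - 2) * g4 (m - 3)
          - X 0 * X 2 * g4 (m - 2) * g4 (m - 4)
          - X 1 * X 2 * g4 (m - 3) * g4 (m - 4)) * h2
    · rw [g4_pos (r := 2 * m + 1) (by omega), show 2 * m + 1 - 2 = 2 * m - 1 by ring,
        show 2 * m + 1 - 3 = 2 * m - 2 by ring, show 2 * m + 1 - 4 = 2 * m - 3 by ring,
        e1.1, e1.2, e2.2]
      linear_combination (X 0 * X 1 * g4 (m - 2) ^ 2 + X 1 * X 2 * g4 (m - 3) ^ 2) * h2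

lemma g3_double (k : ℕ) : ∀ m : ℤ, m < k →
    g3 (2 * m) = g3 m ^ 2 + X 0 * g3 (m - 1) ^ 2 ∧
    g3 (2 * m + 1) = X 1 * g3 (m - 1) ^ 2 := by
  induction k with
  | zero =>
    intro m hm
    have hm : m < 0 := by simpa using hm
    rw [g3_nonpos (r := 2 * m) (by omega), g3_nonpos (r := 2 * m + 1) (by omega),
      g3_nonpos (r := m) (by omega), g3_nonpos (r := m - 1) (by omega)]
    simp
  | succ k ih =>
    intro m hm
    push_cast at hm
    rcases lt_or_ge m k with h | h
    · exact ih m h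
    have hmk : m = k := by omega
    have e1 := ih (m - 1) (by omega)
    have e2 := ih (m - 2) (by omega)
    rw [show m - 1 - 1 = m - 2 by ring,
      show 2 * (m - 1) = 2 * m - 2 by ring, show 2 * m - 2 + 1 = 2 * m - 1 by ring] at e1
    rw [show m - 2 - 1 = m - 3 by ring,
      show 2 * (m - 2) = 2 * m - 4 by ring, show 2 * m - 4 + 1 = 2 * m - 3 by ring] at e2
    have h2 : (2 : MvPolynomial (Fin 2) (ZMod 2)) = 0 := CharTwo.two_eq_zero
    constructor
    · rcases Nat.eq_zero_or_pos k with h0 | h0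
      · subst h0
        have : m = 0 := by simpa using hmk
        subst this
        rw [g3_nonpos (r := 0 - 1) (by omega)]
        simp [g3_zero]
      · rw [g3_pos (r := 2 * m) (by omega), g3_pos (r := m) (by omega), e1.1, e2.2]
        linear_combination (- X 0 * X 1 * g3 (m - 2) * g3 (m - 3)) * h2
    · rw [g3_pos (r := 2 * m + 1) (by omega), show 2 * m + 1 - 2 = 2 * m - 1 by ring,
        show 2 * m + 1 - 3 = 2 * m - 2 by ring,
        e1.1, e1.2]
      linear_combination (X 0 * X 1 * g3 (m - 2) ^ 2) * h2

lemma g4_even (m : ℤ) :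
    g4 (2 * m) = g4 m ^ 2 + X 0 * g4 (m - 1) ^ 2 + X 2 * g4 (m - 2) ^ 2 :=
  (g4_double (m.toNat + 1) m (by omega)).1
lemma g4_odd (m : ℤ) : g4 (2 * m + 1) = X 1 * g4 (m - 1) ^ 2 :=
  (g4_double (m.toNat + 1) m (by omega)).2
lemma g3_even (m : ℤ) : g3 (2 * m) = g3 m ^ 2 + X 0 * g3 (m - 1) ^ 2 :=
  (g3_double (m.toNat + 1) m (by omega)).1
lemma g3_odd (m : ℤ) : g3 (2 * m + 1) = X 1 * g3 (m - 1) ^ 2 :=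
  (g3_double (m.toNat + 1) m (by omega)).2

lemma incl_X0 : incl (X 0) = X 0 := by simp [incl]
lemma incl_X1 : incl (X 1) = X 1 := by simp [incl]

lemma facts (s : ℕ) : g4 (2 ^ (s + 2) - 3) = 0 ∧
    g4 (2 ^ (s + 2) - 2) = incl (g3 (2 ^ (s + 2) - 2)) ∧
    g4 (2 ^ (s + 2) - 1) = incl (g3 (2 ^ (s + 2) - 1)) := by
  induction s with
  | zero =>
    have a1 : g4 1 = 0 := by
      rw [g4_pos (by norm_num)]; norm_num; simp [g4_nonpos]
    have a2 : g4 2 = X 0 := by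
      rw [g4_pos (by norm_num)]; norm_num; simp [g4_nonpos, g4_zero]
    have a3 : g4 3 = X 1 := by
      rw [g4_pos (by norm_num)]; norm_num; simp [g4_nonpos, g4_zero, a1]
    have b1 : g3 1 = 0 := by
      rw [g3_pos (by norm_num)]; norm_num; simp [g3_nonpos]
    have b2 : g3 2 = X 0 := by
      rw [g3_pos (by norm_num)]; norm_num; simp [g3_nonpos, g3_zero]
    have b3 : g3 3 = X 1 := by
      rw [g3_pos (by norm_num)]; norm_num; simp [g3_zero, b1]
    norm_num [a1, a2, a3, b2, b3, incl_X0, incl_X1]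
  | succ s ih =>
    obtain ⟨h3, h2, h1⟩ := ih
    set N : ℤ := 2 ^ (s + 2) with hN
    have e : (2 : ℤ) ^ (s + 1 + 2) = 2 * N := by rw [hN]; ring
    rw [e]
    refine ⟨?_, ?_, ?_⟩
    · rw [show 2 * N - 3 = 2 * (N - 2) + 1 by ring, g4_odd, show N - 2 - 1 = N - 3 by ring, h3]
      simp
    · rw [show 2 * N - 2 = 2 * (N - 1) by ring, g4_even, g3_even, show N - 1 - 1 = N - 2 by ring,
        show N - 1 - 2 = N - 3 by ring, h3, h2, h1]
      simp [incl_X0]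
    · rw [show 2 * N - 1 = 2 * (N - 1) + 1 by ring, g4_odd, g3_odd, show N - 1 - 1 = N - 2 by ring,
        h2]
      simp [incl_X1]

/-- The map to polynomials in `w_4` over a quotient of `F_2[w_2,w_3]`. -/
noncomputable def Theta (I : Ideal (MvPolynomial (Fin 2) (ZMod 2))) :
    MvPolynomial (Fin 3) (ZMod 2) →ₐ[ZMod 2]
      Polynomial (MvPolynomial (Fin 2) (ZMod 2) ⧸ I) :=
  aeval ![Polynomial.C (Ideal.Quotient.mk I (X 0)), Polynomial.C (Ideal.Quotient.mk I (X 1)),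
    Polynomial.X]

lemma Theta_X2 (I) : Theta I (X 2) = Polynomial.X := by simp [Theta]

lemma Theta_incl (I) (p) : Theta I (incl p) = Polynomial.C (Ideal.Quotient.mk I p) := by
  have : (Theta I : _ →+* _).comp incl = Polynomial.C.comp (Ideal.Quotient.mk I) := by
    apply MvPolynomial.ringHom_ext
    · intro r
      exact DFunLike.congr_fun (Subsingleton.elim
        (((Theta I : _ →+* _).comp incl).comp C)
        ((Polynomial.C.comp (Ideal.Quotient.mk I)).comp C)) r
    · intro i
      fin_cases i <;> simp [Theta, incl]
  exact DFunLike.congr_fun this p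

lemma Theta_monic (I) [Nontrivial (MvPolynomial (Fin 2) (ZMod 2) ⧸ I)] (s : ℕ) :
    Polynomial.IsMonicOfDegree (Theta I (g4 (2 ^ (s + 2) - 4))) (2 ^ s - 1) := by
  induction s with
  | zero => norm_num [g4_zero]
  | succ s ih =>
    obtain ⟨h3, h2, h1⟩ := facts s
    set N : ℤ := 2 ^ (s + 2) with hN
    have e : (2 : ℤ) ^ (s + 1 + 2) = 2 * N := by rw [hN]; ring
    have hs : 1 ≤ 2 ^ s := Nat.one_le_two_pow
    rw [e, show 2 * N - 4 = 2 * (N - 2) by ring, g4_even, show N - 2 - 1 = N - 3 by ring,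
        show N - 2 - 2 = N - 4 by ring, h3, h2]
    have key := (Polynomial.isMonicOfDegree_X _).mul (ih.pow 2)
    rw [show 1 + (2 ^ s - 1) * 2 = 2 ^ (s + 1) - 1 by rw [pow_succ]; omega] at key
    have : Theta I (incl (g3 (N - 2)) ^ 2 + X 0 * 0 ^ 2 + X 2 * g4 (N - 4) ^ 2)
      = Polynomial.X * Theta I (g4 (N - 4)) ^ 2
        + Polynomial.C ((Ideal.Quotient.mk I (g3 (N - 2))) ^ 2) := by
      simp only [map_add, map_mul, map_pow, Theta_X2, Theta_incl, map_zero]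
      ring
    rw [this]
    apply key.add_right
    rw [Polynomial.natDegree_C, pow_succ]; omega

lemma exists_functional (s : ℕ) (I : Ideal (MvPolynomial (Fin 2) (ZMod 2)))
    [Nontrivial (MvPolynomial (Fin 2) (ZMod 2) ⧸ I)]
    (hI2 : g3 (2 ^ (s + 2) - 2) ∈ I) (hI1 : g3 (2 ^ (s + 2) - 1) ∈ I) (k : ℕ) :
    ∃ φ : (MvPolynomial (Fin 3) (ZMod 2) ⧸ I4 (2 ^ (s + 2) - 2)) →ₗ[ZMod 2]
      (MvPolynomial (Fin 2) (ZMod 2) ⧸ I),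
      ∀ p d, d + 1 < 2 ^ s - 1 →
        φ (Ideal.Quotient.mk _ (incl p) * (Ideal.Quotient.mk _ (X 2)) ^ d) =
          if d + 1 = k then Ideal.Quotient.mk _ p else 0 := by
  have hm := Theta_monic I s
  obtain ⟨h3, h2, h1⟩ := facts s
  set N : ℤ := 2 ^ (s + 2) with hN
  have hN4 : 4 ≤ N := by
    rw [hN, pow_add]; have : (1 : ℤ) ≤ 2 ^ s := one_le_pow₀ (by norm_num)
    omega
  set β := Theta I (g4 (N - 4)) with hβ
  let f : MvPolynomial (Fin 3) (ZMod 2) →+ (MvPolynomial (Fin 2) (ZMod 2) ⧸ I) :=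
    ((Polynomial.lcoeff _ k).toAddMonoidHom.comp
      (Polynomial.modByMonicHom β).toAddMonoidHom).comp
      ((AddMonoidHom.mulLeft Polynomial.X).comp (Theta I : _ →+ _))
  have hf : ∀ p, f p = ((Polynomial.X * Theta I p) %ₘ β).coeff k := fun p => rfl
  have hker : ∀ p ∈ I4 (N - 2), β ∣ Polynomial.X * Theta I p := by
    have hgen : ∀ p ∈ ({g4 (N - 2 - 3), g4 (N - 2 - 2), g4 (N - 2 - 1), g4 (N - 2)} : Set _),
        β ∣ Polynomial.X * Theta I p := by
      have ha : Theta I (g4 (N - 2)) = 0 := by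
        rw [h2, Theta_incl, Ideal.Quotient.eq_zero_iff_mem.2 hI2, map_zero]
      have hb : Theta I (g4 (N - 1)) = 0 := by
        rw [h1, Theta_incl, Ideal.Quotient.eq_zero_iff_mem.2 hI1, map_zero]
      have hc : Polynomial.X * Theta I (g4 (N - 5)) = - Theta I (X 1) * β := by
        rw [g4_pos (r := N - 1) (by omega), show N - 1 - 2 = N - 3 by ring,
          show N - 1 - 3 = N - 4 by ring, show N - 1 - 4 = N - 5 by ring, h3] at hb
        simp only [map_add, map_mul, Theta_X2, map_zero] at hb
        linear_combination hb
      intro p hp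
      rcases hp with rfl | rfl | rfl | rfl
      · rw [show N - 2 - 3 = N - 5 by ring, hc]; exact ⟨-Theta I (X 1), by ring⟩
      · rw [show N - 2 - 2 = N - 4 by ring]; exact ⟨Polynomial.X, by rw [hβ]; ring⟩
      · rw [show N - 2 - 1 = N - 3 by ring, h3]; simp
      · rw [ha]; simp
    intro p hp
    induction hp using Submodule.span_induction with
    | mem p hp => exact hgen p hp
    | zero => rw [map_zero, mul_zero]; exact dvd_zero _
    | add x y _ _ hx hy => rw [map_add, mul_add]; exact dvd_add hx hy
    | smul a x _ hx =>
      obtain ⟨c, hc⟩ := hx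
      refine ⟨Theta I a * c, ?_⟩
      rw [smul_eq_mul, map_mul]
      linear_combination Theta I a * hc
  have hker' : ∀ p ∈ (I4 (N - 2)).toAddSubgroup, f p = 0 := by
    intro p hp
    rw [hf, (Polynomial.modByMonic_eq_zero_iff_dvd hm.monic).2 (hker p hp), Polynomial.coeff_zero]
  let φ₀ : (MvPolynomial (Fin 3) (ZMod 2) ⧸ I4 (N - 2)) →+ (MvPolynomial (Fin 2) (ZMod 2) ⧸ I) :=
    QuotientAddGroup.lift _ f hker'
  refine ⟨φ₀.toZModLinearMap 2, fun p d hd => ?_⟩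
  rw [← map_pow, ← map_mul]
  change f _ = _
  rw [hf, map_mul, map_pow, Theta_X2, Theta_incl]
  rw [show (Polynomial.X * (Polynomial.C ((Ideal.Quotient.mk I) p) * Polynomial.X ^ d)) =
    Polynomial.C ((Ideal.Quotient.mk I) p) * Polynomial.X ^ (d + 1) by ring]
  rw [(Polynomial.modByMonic_eq_self_iff hm.monic).2, Polynomial.coeff_C_mul_X_pow]
  · simp only [eq_comm]
  · refine lt_of_le_of_lt (Polynomial.degree_C_mul_X_pow_le _ _) ?_
    rw [Polynomial.degree_eq_natDegree hm.monic.ne_zero, hm.natDegree_eq]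
    exact_mod_cast hd

open TensorProduct in
/-- Lemma 5.2: let `t ≥ 5`, `A = F_2[w_2,w_3]/I_{2^t,3}`, `B = F_2[w_2,w_3,w_4]/I_{2^t-2,4}`,
and let `ψ : A → B` be the `F_2`-algebra homomorphism induced by the inclusion
`F_2[w_2,w_3] ⊆ F_2[w_2,w_3,w_4]`. If `z ≠ 0` in `A ⊗ A`, then
`(ψ⊗ψ)(z) · Σ_{d=2}^{2^{t-2}-3} w_4^d ⊗ w_4^{2^{t-2}-1-d} ≠ 0` in `B ⊗ B`. -/
theorem stmt18 (t : ℕ) (ht : 5 ≤ t)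
    (ψ : (MvPolynomial (Fin 2) (ZMod 2) ⧸ I3 (2 ^ t)) →ₐ[ZMod 2]
      (MvPolynomial (Fin 3) (ZMod 2) ⧸ I4 (2 ^ t - 2)))
    (hψ : ∀ p : MvPolynomial (Fin 2) (ZMod 2),
      ψ (Ideal.Quotient.mk (I3 (2 ^ t)) p) = Ideal.Quotient.mk (I4 (2 ^ t - 2)) (incl p))
    (z : (MvPolynomial (Fin 2) (ZMod 2) ⧸ I3 (2 ^ t)) ⊗[ZMod 2]
      (MvPolynomial (Fin 2) (ZMod 2) ⧸ I3 (2 ^ t)))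
    (hz : z ≠ 0) :
    Algebra.TensorProduct.map ψ ψ z *
        ∑ d ∈ Finset.Icc 2 (2 ^ (t - 2) - 3),
          ((Ideal.Quotient.mk (I4 (2 ^ t - 2)) (X 2)) ^ d) ⊗ₜ[ZMod 2]
            ((Ideal.Quotient.mk (I4 (2 ^ t - 2)) (X 2)) ^ (2 ^ (t - 2) - 1 - d))
      ≠ 0 := by
  obtain ⟨s, rfl⟩ : ∃ s, t = s + 2 := ⟨t - 2, by omega⟩
  have hs : 8 ≤ 2 ^ s := by
    calc 8 = 2 ^ 3 := by norm_num
      _ ≤ 2 ^ s := Nat.pow_le_pow_right (by norm_num) (by omega)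
  rw [show s + 2 - 2 = s by omega]
  generalize hH : 2 ^ s = H at hs
  have hnt : Nontrivial (MvPolynomial (Fin 2) (ZMod 2) ⧸ I3 (2 ^ (s + 2))) := by
    by_contra hcon
    rw [not_nontrivial_iff_subsingleton] at hcon
    apply hz
    induction z using TensorProduct.induction_on with
    | zero => rfl
    | tmul a b => rw [Subsingleton.elim a 0, TensorProduct.zero_tmul]
    | add x y hx hy =>
      by_cases h : x = 0
      · by_cases h' : y = 0
        · rw [h, h', add_zero]
        · exact absurd (hy h') h'
      · exact absurd (hx h) h
  obtain ⟨φ, hφ⟩ := exists_functional s (I3 (2 ^ (s + 2)))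
    (Ideal.subset_span (by simp)) (Ideal.subset_span (by simp)) (H - 2)
  obtain ⟨χ, hχ⟩ := exists_functional s (I3 (2 ^ (s + 2)))
    (Ideal.subset_span (by simp)) (Ideal.subset_span (by simp)) 3
  rw [hH] at hφ hχ
  intro h0
  apply hz
  have key : ∀ z, TensorProduct.map φ χ (Algebra.TensorProduct.map ψ ψ z *
        ∑ d ∈ Finset.Icc 2 (H - 3),
          ((Ideal.Quotient.mk (I4 (2 ^ (s + 2) - 2)) (X 2)) ^ d) ⊗ₜ[ZMod 2]
            ((Ideal.Quotient.mk (I4 (2 ^ (s + 2) - 2)) (X 2)) ^ (H - 1 - d))) = z := by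
    intro z
    induction z using TensorProduct.induction_on with
    | zero => simp
    | add x y hx hy => rw [map_add, add_mul, map_add, hx, hy]
    | tmul a b =>
      obtain ⟨p, rfl⟩ := Ideal.Quotient.mk_surjective a
      obtain ⟨q, rfl⟩ := Ideal.Quotient.mk_surjective b
      rw [Algebra.TensorProduct.map_tmul, hψ, hψ, Finset.mul_sum, map_sum,
        Finset.sum_eq_single (H - 3)]
      · rw [Algebra.TensorProduct.tmul_mul_tmul, TensorProduct.map_tmul,
          hφ _ _ (by omega), hχ _ _ (by omega), if_pos (by omega), if_pos (by omega)]
      · intro d hd hne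
        rw [Finset.mem_Icc] at hd
        rw [Algebra.TensorProduct.tmul_mul_tmul, TensorProduct.map_tmul,
          hφ _ _ (by omega), if_neg (by omega), TensorProduct.zero_tmul]
      · intro h
        exact absurd (Finset.mem_Icc.2 ⟨by omega, le_rfl⟩) h
  rw [← key z, h0, map_zero]
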